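/- Let λ ≥ 1, 0 < σ < 1/2 and 2σ < α ≤ 1. Suppose u ∈ C^α_+ (with u ∈ Lip_+ when α = 1) and ∫₀^∞ |u(y)|/(1+y)^{1+2σ} dy < ∞. Then for every x > 0: the integral ∫₀^∞ (u(x) − u(y)) K_σ^λ(x,y) dy converges absolutely, the integral ∫₀^∞ (W_t^λ u(x) − u(x)) t^{−1−σ} dt converges absolutely, and (1/Γ(−σ)) ∫₀^∞ (W_t^λ u(x) − u(x)) t^{−1−σ} dt = ∫₀^∞ (u(x) − u(y)) K_σ^λ(x,y) dy + u(x) B_σ^λ(x). Moreover, the right-hand side is a continuous function of x on ℝ₊. -/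

import Mathlib

open Real MeasureTheory Set Filter

noncomputable section

/-- The modified Bessel function of the first kind `I_ν(z)`. -/
def besselI (ν z : ℝ) : ℝ :=
  ∑' k : ℕ, (z / 2) ^ (2 * (k : ℝ) + ν) / ((Nat.factorial k : ℝ) * Real.Gamma ((k : ℝ) + ν + 1))

/-- The Bessel heat kernel `W_t^λ(x,y)`. -/
def besselHeatKernel (lam t x y : ℝ) : ℝ :=
  Real.sqrt (x * y) / (2 * t) * besselI (lam - 1 / 2) (x * y / (2 * t)) *
    Real.exp (-(x ^ 2 + y ^ 2) / (4 * t))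

/-- The Bessel–Poisson kernel `P_t^λ(x,y)`, obtained by subordination. -/
def besselPoissonKernel (lam t x y : ℝ) : ℝ :=
  t / (2 * Real.sqrt Real.pi) *
    ∫ s in Set.Ioi (0 : ℝ),
      s ^ (-(3 : ℝ) / 2) * Real.exp (-t ^ 2 / (4 * s)) * besselHeatKernel lam s x y

/-- The Bessel heat semigroup `W_t^λ u (x)`. -/
def heatSemigroup (lam : ℝ) (u : ℝ → ℝ) (t x : ℝ) : ℝ :=
  ∫ y in Set.Ioi (0 : ℝ), besselHeatKernel lam t x y * u y

/-- The Bessel–Poisson semigroup `P_t^λ f (x)`. -/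
def poissonSemigroup (lam : ℝ) (f : ℝ → ℝ) (t x : ℝ) : ℝ :=
  ∫ y in Set.Ioi (0 : ℝ), besselPoissonKernel lam t x y * f y

/-- The set of Hölder quotients of `f` on `(0,∞)`. -/
def holderRatioSet (α : ℝ) (f : ℝ → ℝ) : Set ℝ :=
  {r | ∃ x y : ℝ, 0 < x ∧ 0 < y ∧ x ≠ y ∧ r = |f x - f y| / |x - y| ^ α}

/-- The set of growth quotients `|f x|/x^α` of `f` on `(0,∞)`. -/
def growthRatioSet (α : ℝ) (f : ℝ → ℝ) : Set ℝ :=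
  {r | ∃ x : ℝ, 0 < x ∧ r = |f x| / x ^ α}

/-- Membership in the Hölder space `C^α_+` (equal to `Lip_+` when `α = 1`). -/
def MemHolderPlus (α : ℝ) (f : ℝ → ℝ) : Prop :=
  ContinuousOn f (Set.Ioi 0) ∧ BddAbove (holderRatioSet α f) ∧ BddAbove (growthRatioSet α f)

/-- The `C^α_+` norm. -/
def holderPlusNorm (α : ℝ) (f : ℝ → ℝ) : ℝ :=
  sSup (holderRatioSet α f) + sSup (growthRatioSet α f)

/-- `Γ(-σ)`, written through the functional equation `Γ(-σ) = Γ(2-σ)/((-σ)(1-σ))`. -/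
def gammaNeg (σ : ℝ) : ℝ := Real.Gamma (2 - σ) / (-σ * (1 - σ))

/-- The kernel `K_σ^λ(x,y)`. -/
def fracKernelK (lam σ x y : ℝ) : ℝ :=
  1 / (-gammaNeg σ) * ∫ t in Set.Ioi (0 : ℝ), besselHeatKernel lam t x y * t ^ (-1 - σ)

/-- `W_t^λ 1 (x)`. -/
def heatOne (lam t x : ℝ) : ℝ := ∫ y in Set.Ioi (0 : ℝ), besselHeatKernel lam t x y

/-- The function `B_σ^λ(x)`. -/
def fracFunB (lam σ x : ℝ) : ℝ :=
  1 / gammaNeg σ * ∫ t in Set.Ioi (0 : ℝ), (heatOne lam t x - 1) * t ^ (-1 - σ)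

/-- The integer `m` with `m - 1 ≤ β < m`. -/
def fracOrder (β : ℝ) : ℕ := Nat.floor β + 1

/-- The Segovia–Wheeden fractional derivative `∂_t^β F(t)`, a complex number. -/
def fracDeriv (β : ℝ) (F : ℝ → ℝ) (t : ℝ) : ℂ :=
  Complex.exp (-(Real.pi * ((fracOrder β : ℝ) - β)) * Complex.I) /
      Complex.ofReal (Real.Gamma ((fracOrder β : ℝ) - β)) *
    Complex.ofReal
      (∫ s in Set.Ioi (0 : ℝ),
        iteratedDeriv (fracOrder β) F (t + s) * s ^ ((fracOrder β : ℝ) - β - 1))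

/-!
The Bessel heat kernel is a Gauss kernel times a profile:
`W_t^λ(x,y) = Φ(xy/(2t)) (4πt)^{-1/2} e^{-(x-y)²/(4t)}` with `Φ(z) = √(2πz) e^{-z} I_{λ-1/2}(z)`.
For `λ ≥ 1`, Poisson's integral for `I_ν` writes `Φ` as `z^λ` times a Laplace transform, from which
`0 ≤ Φ ≤ 1` and `1 - Φ(z) = O(1/z)`; the recurrence `I_{ν-1}(z) = (2ν/z) I_ν(z) + I_{ν+1}(z)`
carries boundedness and `Φ(z) = 1 + O(1/z)` down to `λ ≥ 0`. Hence
`W_t^λ1(x) - 1 = O(min(1, t/x²))`, so `B_σ^λ` converges, and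
`0 ≤ ∫ W_t^λ(x,y) t^{-1-σ} dt ≤ C |x-y|^{-1-2σ}`.

Since `2σ < α`, the function `(u(x) - u(y)) |x-y|^{-1-2σ}` is integrable in `y`: Hölder continuity
controls it near `x`, the growth hypothesis at infinity. This licenses Fubini's theorem in
`W_t^λ u(x) - u(x) = u(x) (W_t^λ1(x) - 1) - ∫ (u(x) - u(y)) W_t^λ(x,y) dy`, integrated against
`t^{-1-σ} dt`. Continuity in `x` is dominated convergence after the substitution `y = x + h`, which
keeps the singularity at `h = 0` while `x` varies.
-/

open scoped NNReal Topology

/-! ### Poisson's integral for `I_ν` -/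

lemma integral_rpow_mul_one_sub_rpow {p q : ℝ} (hp : 0 < p) (hq : 0 < q) :
    ∫ w in (0 : ℝ)..1, w ^ (p - 1) * (1 - w) ^ (q - 1) = Gamma p * Gamma q / Gamma (p + q) := by
  rw [← ProbabilityTheory.beta, ProbabilityTheory.beta_eq_betaIntegralReal p q hp hq,
    Complex.betaIntegral, ← Complex.ofReal_re (∫ w in (0 : ℝ)..1, _),
    ← intervalIntegral.integral_ofReal]
  congr 1
  refine intervalIntegral.integral_congr fun w hw => ?_
  rw [uIcc_of_le zero_le_one] at hw
  push_cast [Complex.ofReal_cpow hw.1, Complex.ofReal_cpow (sub_nonneg.2 hw.2)]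
  rfl

lemma integral_rpow_mul_one_sub_sq_rpow {p q : ℝ} (hp : 0 < p) (hq : 0 < q) :
    ∫ t in (0 : ℝ)..1, t ^ (2 * p - 1) * (1 - t ^ 2) ^ (q - 1) =
      Gamma p * Gamma q / (2 * Gamma (p + q)) := by
  have himage : (fun t : ℝ => t ^ 2) '' Ioo 0 1 = Ioo 0 1 := by
    ext w
    refine ⟨?_, fun hw => ⟨√w, ⟨sqrt_pos.2 hw.1, ?_⟩, sq_sqrt hw.1.le⟩⟩
    · rintro ⟨t, ht, rfl⟩
      exact ⟨pow_pos ht.1 2, pow_lt_one₀ ht.1.le ht.2 two_ne_zero⟩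
    · exact (sqrt_lt' one_pos).2 (by simpa using hw.2)
  have hsubst := integral_image_eq_integral_abs_deriv_smul (f := fun t : ℝ => t ^ 2)
    (f' := fun t => 2 * t) (measurableSet_Ioo (a := 0) (b := 1))
    (fun t _ => by simpa using (hasDerivAt_pow 2 t).hasDerivWithinAt)
    (fun s hs t ht h => (pow_left_inj₀ hs.1.le ht.1.le two_ne_zero).1 h)
    (fun w => w ^ (p - 1) * (1 - w) ^ (q - 1))
  rw [himage, ← integral_Ioc_eq_integral_Ioo, ← intervalIntegral.integral_of_le zero_le_one,
    integral_rpow_mul_one_sub_rpow hp hq] at hsubst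
  rw [mul_comm 2 (Gamma _), ← div_div, hsubst, intervalIntegral.integral_of_le zero_le_one,
    integral_Ioc_eq_integral_Ioo, ← integral_div]
  refine setIntegral_congr_fun measurableSet_Ioo fun t ht => ?_
  have hpow : t ^ (2 * p - 1) = t * (t ^ 2) ^ (p - 1) := by
    rw [← rpow_natCast, ← rpow_mul ht.1.le, mul_comm t, ← rpow_add_one ht.1.ne']
    congr 1
    push_cast
    ring
  simp only [hpow, abs_of_pos (mul_pos two_pos ht.1), smul_eq_mul]
  ring

lemma intervalIntegrable_one_sub_sq_rpow {a : ℝ} (ha : -1 < a) :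
    IntervalIntegrable (fun t : ℝ => (1 - t ^ 2) ^ a) volume 0 1 := by
  have h := integral_rpow_mul_one_sub_sq_rpow (p := 1 / 2) (q := a + 1) (by norm_num) (by linarith)
  rw [add_sub_cancel_right] at h
  refine (intervalIntegral.intervalIntegrable_of_integral_ne_zero (h.trans_ne ?_)).congr
    fun t _ => by simp
  have := Gamma_pos_of_pos (by linarith : 0 < a + 1)
  have := Gamma_pos_of_pos (by linarith : 0 < 1 / 2 + (a + 1))
  have := Gamma_pos_of_pos (by norm_num : (0 : ℝ) < 1 / 2)
  positivity

lemma hasSum_integral_cosh_mul_one_sub_sq_rpow (z : ℝ) {a : ℝ} (ha : -1 < a) :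
    HasSum (fun k : ℕ => z ^ (2 * k) / ((2 * k).factorial : ℝ) *
      (Gamma (k + 1 / 2) * Gamma (a + 1) / (2 * Gamma (k + a + 3 / 2))))
      (∫ t in (0 : ℝ)..1, cosh (z * t) * (1 - t ^ 2) ^ a) := by
  have hterm (k : ℕ) : ∫ t in (0 : ℝ)..1, (z * t) ^ (2 * k) / ((2 * k).factorial : ℝ) *
      (1 - t ^ 2) ^ a = z ^ (2 * k) / ((2 * k).factorial : ℝ) *
      (Gamma (k + 1 / 2) * Gamma (a + 1) / (2 * Gamma (k + a + 3 / 2))) := by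
    have h := integral_rpow_mul_one_sub_sq_rpow (p := k + 1 / 2) (q := a + 1) (by positivity)
      (by linarith)
    rw [show (k + 1 / 2 + (a + 1) : ℝ) = k + a + 3 / 2 by ring,
      show 2 * (k + 1 / 2 : ℝ) - 1 = (2 * k : ℕ) by push_cast; ring, add_sub_cancel_right] at h
    simp only [← h, rpow_natCast, ← intervalIntegral.integral_const_mul, mul_pow]
    congr with t
    ring
  simp only [← hterm]
  refine intervalIntegral.hasSum_integral_of_dominated_convergence
    (fun k t => |z| ^ (2 * k) / ((2 * k).factorial : ℝ) * (1 - t ^ 2) ^ a)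
    (fun k => Measurable.aestronglyMeasurable (by fun_prop))
    (fun k => Eventually.of_forall fun t ht => ?_)
    (Eventually.of_forall fun t _ => (hasSum_cosh |z|).summable.mul_right _) ?_
    (Eventually.of_forall fun t _ => (hasSum_cosh (z * t)).mul_right _)
  · rw [uIoc_of_le zero_le_one] at ht
    have ht2 : 0 ≤ 1 - t ^ 2 := sub_nonneg.2 (pow_le_one₀ ht.1.le ht.2)
    rw [norm_mul, norm_div, norm_pow, Real.norm_natCast, norm_mul, Real.norm_eq_abs,
      Real.norm_eq_abs, norm_of_nonneg (rpow_nonneg ht2 a), abs_of_pos ht.1]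
    have : |z| * t ≤ |z| := mul_le_of_le_one_right (abs_nonneg z) ht.2
    have := mul_nonneg (abs_nonneg z) ht.1.le
    gcongr
  · simp only [tsum_mul_right]
    exact (intervalIntegrable_one_sub_sq_rpow ha).const_mul _

lemma hasSum_besselI {ν z : ℝ} (hν : -1 / 2 < ν) (hz : 0 < z) :
    HasSum (fun k : ℕ => (z / 2) ^ (2 * (k : ℝ) + ν) / (k.factorial * Gamma (k + ν + 1)))
      ((z / 2) ^ ν * (2 / (√π * Gamma (ν + 1 / 2))) *
        ∫ t in (0 : ℝ)..1, cosh (z * t) * (1 - t ^ 2) ^ (ν - 1 / 2)) := by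
  refine ((hasSum_integral_cosh_mul_one_sub_sq_rpow z (by linarith)).mul_left _).congr_fun
    fun k => ?_
  have hΓ : 0 < Gamma (ν + 1 / 2) := Gamma_pos_of_pos (by linarith)
  have hΓk : 0 < Gamma (k + ν + 1) := Gamma_pos_of_pos (by linarith [k.cast_nonneg (α := ℝ)])
  have hfactorial : ((2 * k).factorial : ℝ) =
      2 ^ k * k.factorial * ((2 * k - 1).doubleFactorial : ℝ) := by
    rcases k with _ | n
    · simp
    · have h := Nat.factorial_eq_mul_doubleFactorial (2 * n + 1)
      rw [show 2 * n + 1 + 1 = 2 * (n + 1) by ring, Nat.doubleFactorial_two_mul] at h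
      rw [h]
      push_cast
      rfl
  have : (0 : ℝ) < (2 * k - 1).doubleFactorial := mod_cast Nat.doubleFactorial_pos _
  have hpow : (z / 2) ^ (2 * (k : ℝ)) = z ^ (2 * k) / (2 ^ k * 2 ^ k) := by
    rw [← Nat.cast_two, ← Nat.cast_mul, rpow_natCast, div_pow, Nat.cast_two, ← pow_add, two_mul]
  rw [rpow_add (by positivity), Gamma_nat_add_half, hpow, hfactorial,
    show ν - 1 / 2 + 1 = ν + 1 / 2 by ring, show k + (ν - 1 / 2) + 3 / 2 = k + ν + 1 by ring]
  generalize Gamma (ν + 1 / 2) = Γν at hΓ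
  field_simp

lemma besselI_eq_integral {ν z : ℝ} (hν : -1 / 2 < ν) (hz : 0 < z) :
    besselI ν z = (z / 2) ^ ν * (2 / (√π * Gamma (ν + 1 / 2))) *
      ∫ t in (0 : ℝ)..1, cosh (z * t) * (1 - t ^ 2) ^ (ν - 1 / 2) :=
  (hasSum_besselI hν hz).tsum_eq

lemma besselI_sub_one {ν z : ℝ} (hν : 0 < ν) (hz : 0 < z) :
    besselI (ν - 1) z = 2 * ν / z * besselI ν z + besselI (ν + 1) z := by
  have hshift : HasSum (fun k : ℕ => 2 * k / z *
      ((z / 2) ^ (2 * (k : ℝ) + ν) / (k.factorial * Gamma (k + ν + 1)))) (besselI (ν + 1) z) := by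
    refine (hasSum_nat_add_iff' 1).1 ?_
    simp only [Finset.sum_range_one, Nat.cast_zero, mul_zero, zero_div, zero_mul, sub_zero]
    refine (hasSum_besselI (ν := ν + 1) (by linarith) hz).summable.hasSum.congr_fun fun k => ?_
    rw [Nat.factorial_succ]
    push_cast
    rw [show 2 * ((k : ℝ) + 1) + ν = 2 * k + (ν + 1) + 1 by ring, rpow_add_one (by positivity),
      show (k : ℝ) + 1 + ν + 1 = k + (ν + 1) + 1 by ring]
    generalize Gamma (k + (ν + 1) + 1) = Γk
    field_simp
  have hsum := ((hasSum_besselI (ν := ν) (by linarith) hz).summable.hasSum.mul_left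
    (2 * ν / z)).add hshift
  refine (tsum_congr fun k => ?_).trans hsum.tsum_eq
  have hkν : 0 < k + ν := by positivity
  have := Gamma_pos_of_pos hkν
  rw [show k + (ν - 1) + 1 = k + ν by ring, Gamma_add_one hkν.ne',
    show 2 * (k : ℝ) + (ν - 1) = 2 * k + ν - 1 by ring, rpow_sub_one (by positivity)]
  field_simp
  ring

/-! ### The Bessel profile -/

lemma besselI_nonneg {ν z : ℝ} (hν : -1 ≤ ν) (hz : 0 ≤ z) : 0 ≤ besselI ν z := by
  refine tsum_nonneg fun k => ?_
  have : 0 ≤ Gamma (k + ν + 1) := Gamma_nonneg_of_nonneg (by linarith [k.cast_nonneg (α := ℝ)])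
  positivity

/-- `√(2πz) e^{-z} I_{λ-1/2}(z)`, the factor by which the Bessel heat kernel differs from the
Gauss kernel; it is normalized to tend to `1` as `z → ∞`. -/
def besselProfile (lam z : ℝ) : ℝ := √(2 * π * z) * exp (-z) * besselI (lam - 1 / 2) z

/-- The Laplace transform of `(s (1 - s/2))^{λ-1} / Γ(λ)` on `(0, 2)`, which equals
`z^{-λ}` times the profile `besselProfile`. -/
def besselLaplace (lam z : ℝ) : ℝ :=
  (Gamma lam)⁻¹ * ∫ s in (0 : ℝ)..2, exp (-(z * s)) * (s * (1 - s / 2)) ^ (lam - 1)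

lemma besselProfile_nonneg {lam z : ℝ} (hlam : -1 / 2 ≤ lam) (hz : 0 ≤ z) :
    0 ≤ besselProfile lam z :=
  mul_nonneg (by positivity) (besselI_nonneg (by linarith) hz)

lemma integral_exp_mul_one_sub_sq_rpow (z : ℝ) {a : ℝ} (ha : -1 < a) :
    ∫ t in (-1 : ℝ)..1, exp (z * t) * (1 - t ^ 2) ^ a =
      2 * ∫ t in (0 : ℝ)..1, cosh (z * t) * (1 - t ^ 2) ^ a := by
  have hint (c : ℝ) : IntervalIntegrable (fun t => exp (c * t) * (1 - t ^ 2) ^ a) volume 0 1 :=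
    (intervalIntegrable_one_sub_sq_rpow ha).continuousOn_mul (by fun_prop)
  have hneg : IntervalIntegrable (fun t => exp (z * t) * (1 - t ^ 2) ^ a) volume (-1) 0 := by
    simpa using ((hint (-z)).comp_sub_left 0).symm
  have hreflect : ∫ t in (-1 : ℝ)..0, exp (z * t) * (1 - t ^ 2) ^ a =
      ∫ t in (0 : ℝ)..1, exp (-z * t) * (1 - t ^ 2) ^ a := by
    have h := intervalIntegral.integral_comp_neg (a := -1) (b := 0)
      fun t => exp (-z * t) * (1 - t ^ 2) ^ a
    rw [neg_zero, neg_neg] at h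
    rw [← h]
    congr with t
    rw [neg_mul_neg, neg_sq]
  rw [← intervalIntegral.integral_add_adjacent_intervals hneg (hint z), hreflect,
    ← intervalIntegral.integral_add (hint _) (hint _), ← intervalIntegral.integral_const_mul]
  congr with t
  rw [cosh_eq, neg_mul]
  ring

lemma besselProfile_eq_rpow_mul_besselLaplace {lam z : ℝ} (hlam : 0 < lam) (hz : 0 < z) :
    besselProfile lam z = z ^ lam * besselLaplace lam z := by
  have hsubst : ∫ s in (0 : ℝ)..2, exp (-(z * s)) * (s * (1 - s / 2)) ^ (lam - 1) =
      exp (-z) / 2 ^ (lam - 1) *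
        ∫ t in (-1 : ℝ)..1, exp (z * t) * (1 - t ^ 2) ^ (lam - 1) := by
    have h := intervalIntegral.integral_comp_sub_left (a := 0) (b := 2)
      (fun t => exp (z * t) * (1 - t ^ 2) ^ (lam - 1)) 1
    rw [show (1 - 2 : ℝ) = -1 by norm_num, sub_zero] at h
    rw [← h, ← intervalIntegral.integral_const_mul]
    refine intervalIntegral.integral_congr fun s hs => ?_
    rw [uIcc_of_le zero_le_two] at hs
    have hfactor : 1 - (1 - s) ^ 2 = 2 * (s * (1 - s / 2)) := by ring
    have hexp : exp (-(z * s)) = exp (-z) * exp (z * (1 - s)) := by rw [← exp_add]; ring_nf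
    simp only [hfactor, hexp]
    rw [mul_rpow zero_le_two (mul_nonneg hs.1 (by linarith [hs.2]))]
    field_simp
  rw [besselProfile, besselLaplace, hsubst, integral_exp_mul_one_sub_sq_rpow z (by linarith),
    besselI_eq_integral (by linarith) hz, sub_sub, add_halves, sub_add_cancel,
    div_rpow hz.le zero_le_two, sqrt_mul (by positivity), sqrt_mul zero_le_two,
    rpow_sub_one two_ne_zero, rpow_sub hz, rpow_sub two_pos, ← sqrt_eq_rpow, ← sqrt_eq_rpow]
  have : 0 < Gamma lam := Gamma_pos_of_pos hlam
  field_simp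
  rw [sq_sqrt zero_le_two]

lemma besselProfile_eq_add {lam z : ℝ} (hlam : -1 / 2 < lam) (hz : 0 < z) :
    besselProfile lam z =
      (2 * lam + 1) / z * besselProfile (lam + 1) z + besselProfile (lam + 2) z := by
  have h := besselI_sub_one (ν := lam + 1 / 2) (by linarith) hz
  rw [show lam + 1 / 2 - 1 = lam - 1 / 2 by ring] at h
  rw [besselProfile, besselProfile, besselProfile, h, show lam + 1 - 1 / 2 = lam + 1 / 2 by ring,
    show lam + 2 - 1 / 2 = lam + 1 / 2 + 1 by ring]
  ring

lemma continuous_besselLaplace {lam : ℝ} (hlam : 1 ≤ lam) : Continuous (besselLaplace lam) := by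
  refine continuous_const.mul
    (intervalIntegral.continuous_parametric_intervalIntegral_of_continuous' ?_ 0 2)
  exact (by fun_prop : Continuous fun p : ℝ × ℝ => exp (-(p.1 * p.2))).mul
    (Continuous.rpow_const (by fun_prop) fun _ => Or.inr (sub_nonneg.2 hlam))

lemma besselLaplace_le {lam z : ℝ} (hlam : 1 ≤ lam) (hz : 0 ≤ z) :
    besselLaplace lam z ≤ 2 / Gamma lam := by
  have : 0 < Gamma lam := Gamma_pos_of_pos (by linarith)
  have hint : ‖∫ s in (0 : ℝ)..2, exp (-(z * s)) * (s * (1 - s / 2)) ^ (lam - 1)‖ ≤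
      1 * |2 - 0| := by
    refine intervalIntegral.norm_integral_le_of_norm_le_const fun s hs => ?_
    rw [uIoc_of_le zero_le_two] at hs
    have hw : 0 ≤ s * (1 - s / 2) := mul_nonneg hs.1.le (by linarith [hs.2])
    rw [norm_of_nonneg (by positivity)]
    exact mul_le_one₀ (exp_le_one_iff.2 (neg_nonpos.2 (mul_nonneg hz hs.1.le))) (by positivity)
      (rpow_le_one hw (by nlinarith [sq_nonneg (s - 1)]) (sub_nonneg.2 hlam))
  rw [besselLaplace, inv_mul_eq_div]
  gcongr
  simpa using (le_abs_self _).trans hint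

lemma one_sub_mul_le_one_sub_rpow {a v : ℝ} (ha : 0 ≤ a) (hv0 : 0 ≤ v) (hv1 : v ≤ 1) :
    1 - (a + 1) * v ≤ (1 - v) ^ a :=
  calc 1 - (a + 1) * v = 1 + (a + 1) * -v := by ring
    _ ≤ (1 + -v) ^ (a + 1) := one_add_mul_self_le_rpow_one_add (by linarith) (by linarith)
    _ = (1 - v) ^ (a + 1) := by rw [← sub_eq_add_neg]
    _ ≤ (1 - v) ^ a := rpow_le_rpow_of_exponent_ge' (by linarith) (by linarith) ha (by linarith)

/-- The weight `(s (1 - s/2))^a` of `besselLaplace`, extended by zero from `(0, 2]` so that it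
can be compared with `s^a` on the whole half-line. -/
def poissonWeight (a : ℝ) : ℝ → ℝ := (Ioc 0 2).indicator fun s => (s * (1 - s / 2)) ^ a

lemma poissonWeight_nonneg (a s : ℝ) : 0 ≤ poissonWeight a s :=
  indicator_apply_nonneg fun hs => rpow_nonneg (mul_nonneg hs.1.le (by linarith [hs.2])) a

lemma poissonWeight_le_rpow {a s : ℝ} (ha : 0 ≤ a) (hs : 0 < s) : poissonWeight a s ≤ s ^ a := by
  refine indicator_apply_le' (fun h => ?_) fun _ => by positivity
  exact rpow_le_rpow (mul_nonneg hs.le (by linarith [h.2])) (by nlinarith [sq_nonneg s]) ha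

lemma rpow_sub_poissonWeight_le {a s : ℝ} (ha : 0 ≤ a) (hs : 0 < s) :
    s ^ a - poissonWeight a s ≤ (a + 1) * s ^ (a + 1) := by
  have hsa : 0 ≤ s ^ a := by positivity
  have has : 0 ≤ a * s := by positivity
  rw [rpow_add_one hs.ne', poissonWeight]
  rcases le_or_gt s 2 with h2 | h2
  · have h := one_sub_mul_le_one_sub_rpow (v := s / 2) ha (by linarith) (by linarith)
    rw [indicator_of_mem (mem_Ioc.2 ⟨hs, h2⟩), mul_rpow hs.le (by linarith)]
    nlinarith
  · rw [indicator_of_notMem fun h : s ∈ Ioc 0 2 => h2.not_ge h.2]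
    nlinarith

lemma integrableOn_rpow_mul_exp_neg_mul_Ioi {a r : ℝ} (ha : 0 < a) (hr : 0 < r) :
    IntegrableOn (fun s => s ^ (a - 1) * exp (-(r * s))) (Ioi 0) := by
  simpa only [rpow_one, neg_mul] using
    integrableOn_rpow_mul_exp_neg_mul_rpow (s := a - 1) (p := 1) (by linarith) one_pos hr

lemma integrableOn_poissonWeight_mul_exp {a z : ℝ} (ha : 0 ≤ a) (hz : 0 < z) :
    IntegrableOn (fun s => poissonWeight a s * exp (-(z * s))) (Ioi 0) := by
  refine Integrable.mono' (integrableOn_rpow_mul_exp_neg_mul_Ioi (a := a + 1) (by linarith) hz)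
    (Measurable.aestronglyMeasurable ?_)
    (ae_restrict_of_forall_mem measurableSet_Ioi fun s hs => ?_)
  · exact (Measurable.indicator (by fun_prop) measurableSet_Ioc).mul (by fun_prop)
  · rw [norm_of_nonneg (mul_nonneg (poissonWeight_nonneg a s) (exp_nonneg _)), add_sub_cancel_right]
    gcongr
    exact poissonWeight_le_rpow ha hs

lemma besselLaplace_eq_integral_poissonWeight (lam z : ℝ) :
    besselLaplace lam z =
      (Gamma lam)⁻¹ * ∫ s in Ioi 0, poissonWeight (lam - 1) s * exp (-(z * s)) := by
  rw [besselLaplace, intervalIntegral.integral_of_le zero_le_two,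
    ← inter_eq_self_of_subset_right (Ioc_subset_Ioi_self : Ioc (0 : ℝ) 2 ⊆ Ioi 0),
    ← setIntegral_indicator measurableSet_Ioc]
  congr with s
  by_cases hs : s ∈ Ioc 0 2 <;> simp [poissonWeight, hs, mul_comm]

lemma rpow_mul_inv_Gamma_mul_integral_rpow_mul_exp {a z : ℝ} (ha : 0 < a) (hz : 0 < z) :
    z ^ a * ((Gamma a)⁻¹ * ∫ s in Ioi 0, s ^ (a - 1) * exp (-(z * s))) = 1 := by
  have : 0 < Gamma a := Gamma_pos_of_pos ha
  have : 0 < z ^ a := by positivity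
  rw [integral_rpow_mul_exp_neg_mul_Ioi ha hz, div_rpow zero_le_one hz.le, one_rpow]
  field_simp

lemma besselProfile_le_one {lam z : ℝ} (hlam : 1 ≤ lam) (hz : 0 < z) :
    besselProfile lam z ≤ 1 := by
  have hlam0 : 0 < lam := by linarith
  have : 0 < Gamma lam := Gamma_pos_of_pos hlam0
  have hw := integrableOn_poissonWeight_mul_exp (sub_nonneg.2 hlam) hz
  have hs := integrableOn_rpow_mul_exp_neg_mul_Ioi hlam0 hz
  rw [besselProfile_eq_rpow_mul_besselLaplace hlam0 hz, besselLaplace_eq_integral_poissonWeight]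
  refine le_of_le_of_eq ?_ (rpow_mul_inv_Gamma_mul_integral_rpow_mul_exp hlam0 hz)
  refine mul_le_mul_of_nonneg_left (mul_le_mul_of_nonneg_left ?_ (by positivity)) (by positivity)
  refine setIntegral_mono_on hw hs measurableSet_Ioi fun s hs => ?_
  gcongr
  exact poissonWeight_le_rpow (sub_nonneg.2 hlam) hs

lemma one_sub_besselProfile_le {lam z : ℝ} (hlam : 1 ≤ lam) (hz : 0 < z) :
    1 - besselProfile lam z ≤ lam ^ 2 / z := by
  have hlam0 : 0 < lam := by linarith
  have : 0 < Gamma lam := Gamma_pos_of_pos hlam0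
  have hw := integrableOn_poissonWeight_mul_exp (sub_nonneg.2 hlam) hz
  have hs := integrableOn_rpow_mul_exp_neg_mul_Ioi hlam0 hz
  have hs1 := integrableOn_rpow_mul_exp_neg_mul_Ioi (by linarith : 0 < lam + 1) hz
  have hone := rpow_mul_inv_Gamma_mul_integral_rpow_mul_exp (by linarith : 0 < lam + 1) hz
  have hmono : (∫ s in Ioi 0, s ^ (lam - 1) * exp (-(z * s))) -
      (∫ s in Ioi 0, poissonWeight (lam - 1) s * exp (-(z * s))) ≤
        lam * ∫ s in Ioi 0, s ^ (lam + 1 - 1) * exp (-(z * s)) := by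
    rw [← integral_sub hs hw, ← integral_const_mul]
    refine setIntegral_mono_on (hs.sub hw) (hs1.const_mul lam) measurableSet_Ioi fun s hs => ?_
    have h := rpow_sub_poissonWeight_le (sub_nonneg.2 hlam) hs
    rw [sub_add_cancel] at h
    rw [← sub_mul, ← mul_assoc, add_sub_cancel_right]
    gcongr
  calc 1 - besselProfile lam z
      = z ^ lam * ((Gamma lam)⁻¹ * ((∫ s in Ioi 0, s ^ (lam - 1) * exp (-(z * s))) -
          ∫ s in Ioi 0, poissonWeight (lam - 1) s * exp (-(z * s)))) := by
        rw [mul_sub, mul_sub, rpow_mul_inv_Gamma_mul_integral_rpow_mul_exp hlam0 hz,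
          ← besselLaplace_eq_integral_poissonWeight,
          ← besselProfile_eq_rpow_mul_besselLaplace hlam0 hz]
    _ ≤ z ^ lam * ((Gamma lam)⁻¹ * (lam * ∫ s in Ioi 0, s ^ (lam + 1 - 1) * exp (-(z * s)))) := by
        gcongr
    _ = lam ^ 2 / z * (z ^ (lam + 1) * ((Gamma (lam + 1))⁻¹ *
          ∫ s in Ioi 0, s ^ (lam + 1 - 1) * exp (-(z * s)))) := by
        rw [Gamma_add_one hlam0.ne', rpow_add_one hz.ne']
        field_simp
    _ = lam ^ 2 / z := by rw [hone, mul_one]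

lemma continuousOn_besselProfile {lam : ℝ} (hlam : 0 ≤ lam) :
    ContinuousOn (besselProfile lam) (Ioi 0) := by
  -- The recurrence reduces `0 ≤ λ` to `1 ≤ λ`, where the weight of `besselLaplace` is continuous.
  have hlaplace (mu : ℝ) (hmu : 1 ≤ mu) : ContinuousOn (besselProfile mu) (Ioi 0) :=
    (ContinuousOn.mul (continuousOn_id.rpow_const fun z hz => Or.inl (ne_of_gt hz))
      (continuous_besselLaplace hmu).continuousOn).congr
        fun z hz => besselProfile_eq_rpow_mul_besselLaplace (by linarith) hz
  refine (((continuousOn_const.div continuousOn_id fun z hz => ne_of_gt hz).mul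
    (hlaplace (lam + 1) (by linarith))).add (hlaplace (lam + 2) (by linarith))).congr
      fun z hz => besselProfile_eq_add (by linarith) hz

lemma abs_besselProfile_sub_one_le {lam z : ℝ} (hlam : 0 ≤ lam) (hz : 0 < z) :
    |besselProfile lam z - 1| ≤ ((lam + 2) ^ 2 + (2 * lam + 1)) / z := by
  have h1 : besselProfile (lam + 1) z ≤ 1 := besselProfile_le_one (by linarith) hz
  have h1' : 0 ≤ besselProfile (lam + 1) z := besselProfile_nonneg (by linarith) hz.le
  have h2 : besselProfile (lam + 2) z ≤ 1 := besselProfile_le_one (by linarith) hz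
  have h2' : 1 - besselProfile (lam + 2) z ≤ (lam + 2) ^ 2 / z :=
    one_sub_besselProfile_le (by linarith) hz
  have hc : 0 ≤ (2 * lam + 1) / z := by positivity
  rw [besselProfile_eq_add (by linarith) hz, abs_le, add_div]
  constructor <;> nlinarith [div_nonneg (sq_nonneg (lam + 2)) hz.le]

lemma exists_besselProfile_le {lam : ℝ} (hlam : 0 ≤ lam) :
    ∃ C, 0 < C ∧ ∀ z, 0 < z → besselProfile lam z ≤ C := by
  have : 0 < Gamma (lam + 1) := Gamma_pos_of_pos (by linarith)
  set A := 2 / Gamma (lam + 1)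
  have hA : 0 < A := by positivity
  refine ⟨(2 * lam + 1) * (A + 1) + 1, by positivity, fun z hz => ?_⟩
  have hdiv : besselProfile (lam + 1) z / z ≤ A + 1 := by
    rcases le_or_gt z 1 with hz1 | hz1
    · calc besselProfile (lam + 1) z / z = z ^ lam * besselLaplace (lam + 1) z := by
            rw [besselProfile_eq_rpow_mul_besselLaplace (by linarith) hz, rpow_add_one hz.ne']
            field_simp
        _ ≤ z ^ lam * A := by
            gcongr
            exact besselLaplace_le (by linarith) hz.le
        _ ≤ A := mul_le_of_le_one_left hA.le (rpow_le_one hz.le hz1 hlam)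
        _ ≤ A + 1 := by linarith
    · calc besselProfile (lam + 1) z / z ≤ 1 / 1 := by
            gcongr
            exact besselProfile_le_one (by linarith) hz
        _ ≤ A + 1 := by linarith
  have hadd : besselProfile (lam + 2) z ≤ 1 := besselProfile_le_one (by linarith) hz
  calc besselProfile lam z
      = (2 * lam + 1) * (besselProfile (lam + 1) z / z) + besselProfile (lam + 2) z := by
        rw [besselProfile_eq_add (by linarith) hz]
        ring
    _ ≤ (2 * lam + 1) * (A + 1) + 1 := by gcongr

/-! ### Comparison with the Gauss kernel -/

/-- The Gauss–Weierstrass kernel of the line at time `t`, as a function of the displacement `h`. -/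
def lineHeatKernel (t h : ℝ) : ℝ := (√(4 * π * t))⁻¹ * exp (-h ^ 2 / (4 * t))

lemma lineHeatKernel_nonneg (t h : ℝ) : 0 ≤ lineHeatKernel t h := by
  unfold lineHeatKernel
  positivity

lemma lineHeatKernel_sub_eq_gaussianPDFReal {t : ℝ} (ht : 0 ≤ t) (x y : ℝ) :
    lineHeatKernel t (x - y) = ProbabilityTheory.gaussianPDFReal x (2 * t).toNNReal y := by
  rw [lineHeatKernel, ProbabilityTheory.gaussianPDFReal, coe_toNNReal _ (by positivity),
    sub_sq_comm x y]
  ring_nf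

lemma integrable_lineHeatKernel_sub {t : ℝ} (ht : 0 ≤ t) (x : ℝ) :
    Integrable fun y => lineHeatKernel t (x - y) := by
  simpa only [lineHeatKernel_sub_eq_gaussianPDFReal ht] using
    ProbabilityTheory.integrable_gaussianPDFReal x _

lemma integral_lineHeatKernel_sub {t : ℝ} (ht : 0 < t) (x : ℝ) :
    ∫ y, lineHeatKernel t (x - y) = 1 := by
  simp only [lineHeatKernel_sub_eq_gaussianPDFReal ht.le]
  exact ProbabilityTheory.integral_gaussianPDFReal_eq_one x (by simpa using ht)

lemma lineHeatKernel_eq_mul_two_mul (t h : ℝ) :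
    lineHeatKernel t h = √2 * exp (-(h ^ 2 / (8 * t))) * lineHeatKernel (2 * t) h := by
  have hsqrt : √(4 * π * (2 * t)) = √2 * √(4 * π * t) := by
    rw [← sqrt_mul zero_le_two]
    ring_nf
  have hexp : exp (-h ^ 2 / (4 * t)) =
      exp (-(h ^ 2 / (8 * t))) * exp (-h ^ 2 / (4 * (2 * t))) := by
    rw [← exp_add]
    ring_nf
  rw [lineHeatKernel, lineHeatKernel, hsqrt, hexp, mul_inv]
  field_simp

lemma besselHeatKernel_nonneg {lam t x y : ℝ} (hlam : -1 / 2 ≤ lam) (ht : 0 ≤ t)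
    (hxy : 0 ≤ x * y) : 0 ≤ besselHeatKernel lam t x y :=
  mul_nonneg (mul_nonneg (by positivity) (besselI_nonneg (by linarith) (by positivity)))
    (exp_nonneg _)

lemma besselHeatKernel_eq_besselProfile_mul (lam : ℝ) {t x y : ℝ} (ht : 0 < t)
    (hxy : 0 ≤ x * y) :
    besselHeatKernel lam t x y =
      besselProfile lam (x * y / (2 * t)) * lineHeatKernel t (x - y) := by
  have hsqrt : √(2 * π * (x * y / (2 * t))) * (√(4 * π * t))⁻¹ = √(x * y) / (2 * t) := by
    have hquot : 2 * π * (x * y / (2 * t)) * (4 * π * t)⁻¹ = x * y / (2 * t) ^ 2 := by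
      field_simp
      ring
    rw [← sqrt_inv, ← sqrt_mul (by positivity), hquot, sqrt_div hxy, sqrt_sq (by positivity)]
  have hexp : exp (-(x ^ 2 + y ^ 2) / (4 * t)) =
      exp (-(x * y / (2 * t))) * exp (-(x - y) ^ 2 / (4 * t)) := by
    rw [← exp_add]
    congr 1
    field_simp
    ring
  rw [besselHeatKernel, besselProfile, lineHeatKernel, ← hsqrt, hexp]
  ring

lemma exists_besselHeatKernel_le {lam : ℝ} (hlam : 0 ≤ lam) :
    ∃ C, 0 < C ∧ ∀ t x y, 0 < t → 0 < x → 0 < y →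
      besselHeatKernel lam t x y ≤ C * lineHeatKernel t (x - y) := by
  obtain ⟨C, hC, hle⟩ := exists_besselProfile_le hlam
  refine ⟨C, hC, fun t x y ht hx hy => ?_⟩
  rw [besselHeatKernel_eq_besselProfile_mul lam ht (by positivity)]
  exact mul_le_mul_of_nonneg_right (hle _ (by positivity)) (lineHeatKernel_nonneg _ _)

lemma continuousOn_besselHeatKernel {lam : ℝ} (hlam : 0 ≤ lam) :
    ContinuousOn (fun p : ℝ × ℝ × ℝ => besselHeatKernel lam p.1 p.2.1 p.2.2)
      (Ioi 0 ×ˢ Ioi 0 ×ˢ Ioi 0) := by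
  have hpos (p : ℝ × ℝ × ℝ) (hp : p ∈ Ioi (0 : ℝ) ×ˢ Ioi (0 : ℝ) ×ˢ Ioi (0 : ℝ)) :
      0 < p.1 ∧ 0 < p.2.1 ∧ 0 < p.2.2 := hp
  refine ContinuousOn.congr (f := fun p : ℝ × ℝ × ℝ =>
    besselProfile lam (p.2.1 * p.2.2 / (2 * p.1)) * lineHeatKernel p.1 (p.2.1 - p.2.2)) ?_
    fun p hp => besselHeatKernel_eq_besselProfile_mul lam (hpos p hp).1
      (mul_pos (hpos p hp).2.1 (hpos p hp).2.2).le
  refine ((continuousOn_besselProfile hlam).comp ?_ fun p hp => ?_).mul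
    (ContinuousOn.mul (ContinuousOn.inv₀ (by fun_prop) fun p hp => ?_) (.rexp (.div ?_ ?_ ?_)))
  · exact ContinuousOn.div (by fun_prop) (by fun_prop) fun p hp => by
      have := (hpos p hp).1
      positivity
  · obtain ⟨ht, hx, hy⟩ := hpos p hp
    exact div_pos (mul_pos hx hy) (by positivity)
  · have := (hpos p hp).1
    positivity
  · fun_prop
  · fun_prop
  · intro p hp
    have := (hpos p hp).1
    positivity

lemma continuousOn_besselHeatKernel_right {lam t x : ℝ} (hlam : 0 ≤ lam) (ht : 0 < t)
    (hx : 0 < x) : ContinuousOn (besselHeatKernel lam t x) (Ioi 0) :=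
  (continuousOn_besselHeatKernel hlam).comp (f := fun y => (t, x, y)) (by fun_prop)
    fun _ hy => ⟨ht, hx, hy⟩

lemma integrableOn_besselHeatKernel {lam t x : ℝ} (hlam : 0 ≤ lam) (ht : 0 < t) (hx : 0 < x) :
    IntegrableOn (besselHeatKernel lam t x) (Ioi 0) := by
  obtain ⟨C, -, hle⟩ := exists_besselHeatKernel_le hlam
  refine ((integrable_lineHeatKernel_sub ht.le x).const_mul C).integrableOn.mono'
    ((continuousOn_besselHeatKernel_right hlam ht hx).aestronglyMeasurable measurableSet_Ioi)
    (ae_restrict_of_forall_mem measurableSet_Ioi fun y hy => ?_)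
  rw [norm_of_nonneg (besselHeatKernel_nonneg (by linarith) ht.le (mul_pos hx hy).le)]
  exact hle t x y ht hx hy

lemma exp_neg_le_inv {s : ℝ} (hs : 0 < s) : exp (-s) ≤ s⁻¹ := by
  rw [exp_neg]
  exact inv_anti₀ hs (by linarith [add_one_le_exp s])

lemma lineHeatKernel_le_sqrt_two_mul {t : ℝ} (ht : 0 ≤ t) (h : ℝ) :
    lineHeatKernel t h ≤ √2 * lineHeatKernel (2 * t) h := by
  rw [lineHeatKernel_eq_mul_two_mul]
  refine mul_le_mul_of_nonneg_right (mul_le_of_le_one_right (sqrt_nonneg 2) ?_)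
    (lineHeatKernel_nonneg _ _)
  exact exp_le_one_iff.2 (neg_nonpos.2 (by positivity))

lemma lineHeatKernel_le_div_sq_mul {t h : ℝ} (ht : 0 < t) (hh : h ≠ 0) :
    lineHeatKernel t h ≤ √2 * (8 * t / h ^ 2) * lineHeatKernel (2 * t) h := by
  rw [lineHeatKernel_eq_mul_two_mul]
  have h0 := lineHeatKernel_nonneg (2 * t) h
  have hexp := exp_neg_le_inv (s := h ^ 2 / (8 * t)) (by positivity)
  rw [inv_div] at hexp
  gcongr

lemma abs_besselHeatKernel_sub_le_of_half_le {lam t x y : ℝ} (hlam : 0 ≤ lam) (ht : 0 < t)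
    (hx : 0 < x) (hy : x / 2 ≤ y) :
    |besselHeatKernel lam t x y - lineHeatKernel t (x - y)| ≤
      √2 * (4 * ((lam + 2) ^ 2 + (2 * lam + 1))) * (t / x ^ 2) *
        lineHeatKernel (2 * t) (x - y) := by
  have hG := lineHeatKernel_nonneg t (x - y)
  have hy0 : 0 < y := by linarith
  rw [besselHeatKernel_eq_besselProfile_mul lam ht (by positivity), ← sub_one_mul, abs_mul,
    abs_of_nonneg hG]
  calc |besselProfile lam (x * y / (2 * t)) - 1| * lineHeatKernel t (x - y)
      ≤ ((lam + 2) ^ 2 + (2 * lam + 1)) / (x * (x / 2) / (2 * t)) *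
          (√2 * lineHeatKernel (2 * t) (x - y)) := by
        gcongr
        · exact (abs_besselProfile_sub_one_le hlam (by positivity)).trans (by gcongr)
        · exact lineHeatKernel_le_sqrt_two_mul ht.le _
    _ = _ := by
        field_simp
        ring

lemma exists_abs_indicator_besselHeatKernel_sub_le {lam : ℝ} (hlam : 0 ≤ lam) :
    ∃ C, 0 < C ∧ ∀ t x y, 0 < t → 0 < x →
      |(Ioi 0).indicator (besselHeatKernel lam t x) y - lineHeatKernel t (x - y)| ≤
        C * (t / x ^ 2) * lineHeatKernel (2 * t) (x - y) := by
  obtain ⟨C, hC, hle⟩ := exists_besselHeatKernel_le hlam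
  refine ⟨√2 * (4 * ((lam + 2) ^ 2 + (2 * lam + 1))) + √2 * (32 * (C + 1)), by positivity,
    fun t x y ht hx => ?_⟩
  have hG := lineHeatKernel_nonneg t (x - y)
  have hG2 := lineHeatKernel_nonneg (2 * t) (x - y)
  rcases le_or_gt (x / 2) y with hy | hy
  · rw [indicator_of_mem (mem_Ioi.2 (by linarith))]
    refine (abs_besselHeatKernel_sub_le_of_half_le hlam ht hx hy).trans ?_
    gcongr
    exact le_add_of_nonneg_right (by positivity)
  · have hdist : x / 2 ≤ x - y := by linarith
    have hW : |(Ioi 0).indicator (besselHeatKernel lam t x) y| ≤ C * lineHeatKernel t (x - y) := by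
      by_cases hy0 : 0 < y
      · rw [indicator_of_mem (mem_Ioi.2 hy0),
          abs_of_nonneg (besselHeatKernel_nonneg (by linarith) ht.le (by positivity))]
        exact hle t x y ht hx hy0
      · rw [indicator_of_notMem (show y ∉ Ioi 0 from hy0), abs_zero]
        positivity
    calc |(Ioi 0).indicator (besselHeatKernel lam t x) y - lineHeatKernel t (x - y)|
        ≤ C * lineHeatKernel t (x - y) + lineHeatKernel t (x - y) :=
          (abs_sub _ _).trans (add_le_add hW (abs_of_nonneg hG).le)
      _ = (C + 1) * lineHeatKernel t (x - y) := by ring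
      _ ≤ (C + 1) * (√2 * (8 * t / (x / 2) ^ 2) * lineHeatKernel (2 * t) (x - y)) := by
          gcongr
          refine (lineHeatKernel_le_div_sq_mul ht (by linarith : 0 < x - y).ne').trans ?_
          gcongr
      _ = √2 * (32 * (C + 1)) * (t / x ^ 2) * lineHeatKernel (2 * t) (x - y) := by
          field_simp
          ring
      _ ≤ _ := by
          gcongr
          exact le_add_of_nonneg_left (by positivity)

lemma exists_abs_heatOne_sub_one_le {lam : ℝ} (hlam : 0 ≤ lam) :
    ∃ C, 0 < C ∧ ∀ t x, 0 < t → 0 < x → |heatOne lam t x - 1| ≤ C * min 1 (t / x ^ 2) := by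
  obtain ⟨A, hA, hWle⟩ := exists_besselHeatKernel_le hlam
  obtain ⟨D, hD, hsub⟩ := exists_abs_indicator_besselHeatKernel_sub_le hlam
  refine ⟨A + 1 + D, by positivity, fun t x ht hx => ?_⟩
  have hW := integrableOn_besselHeatKernel hlam ht hx
  have hG := integrable_lineHeatKernel_sub ht.le x
  have hbdd : |heatOne lam t x - 1| ≤ A + 1 := by
    have h0 : 0 ≤ heatOne lam t x := setIntegral_nonneg measurableSet_Ioi fun y hy =>
      besselHeatKernel_nonneg (by linarith) ht.le (mul_pos hx hy).le
    have hA : heatOne lam t x ≤ A := by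
      calc heatOne lam t x ≤ ∫ y in Ioi 0, A * lineHeatKernel t (x - y) :=
            setIntegral_mono_on hW (hG.const_mul A).integrableOn measurableSet_Ioi
              fun y hy => hWle t x y ht hx hy
        _ ≤ ∫ y, A * lineHeatKernel t (x - y) :=
            setIntegral_le_integral (hG.const_mul A)
              (ae_of_all _ fun y => mul_nonneg hA.le (lineHeatKernel_nonneg _ _))
        _ = A := by rw [integral_const_mul, integral_lineHeatKernel_sub ht, mul_one]
    rw [abs_le]
    constructor <;> linarith
  have hsmall : |heatOne lam t x - 1| ≤ D * (t / x ^ 2) := by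
    have hone : heatOne lam t x - 1 =
        ∫ y, ((Ioi 0).indicator (besselHeatKernel lam t x) y - lineHeatKernel t (x - y)) := by
      rw [integral_sub (hW.integrable_indicator measurableSet_Ioi) hG,
        integral_indicator measurableSet_Ioi, integral_lineHeatKernel_sub ht, heatOne]
    calc |heatOne lam t x - 1| ≤ ∫ y, D * (t / x ^ 2) * lineHeatKernel (2 * t) (x - y) := by
          rw [hone, ← norm_eq_abs]
          exact norm_integral_le_of_norm_le
            ((integrable_lineHeatKernel_sub (by positivity) x).const_mul _)
            (ae_of_all _ fun y => hsub t x y ht hx)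
      _ = D * (t / x ^ 2) := by
          rw [integral_const_mul, integral_lineHeatKernel_sub (by positivity), mul_one]
  rcases min_choice 1 (t / x ^ 2) with h | h <;> rw [h, add_mul]
  · linarith
  · have : 0 ≤ (A + 1) * (t / x ^ 2) := by positivity
    linarith

lemma continuousAt_besselHeatKernel_add {lam t x h : ℝ} (hlam : 0 ≤ lam) (ht : 0 < t)
    (hx : 0 < x) (hxh : 0 < x + h) :
    ContinuousAt (fun x' => besselHeatKernel lam t x' (x' + h)) x :=
  ((continuousOn_besselHeatKernel hlam).continuousAt
    (prod_mem_nhds (Ioi_mem_nhds ht) (prod_mem_nhds (Ioi_mem_nhds hx) (Ioi_mem_nhds hxh)))).comp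
      (f := fun x' => (t, x', x' + h)) (by fun_prop)

/-! ### The kernel `K_σ^λ` -/

lemma rpow_neg_sub_one_mul_exp_neg_div (a b : ℝ) {t : ℝ} (ht : 0 < t) :
    t ^ (-a - 1) * exp (-(b / t)) =
      t ^ ((-1 : ℝ) - 1) * ((t ^ (-1 : ℝ)) ^ (a - 1) * exp (-(b * t ^ (-1 : ℝ)))) := by
  rw [← rpow_mul ht.le, ← mul_assoc, ← rpow_add ht, rpow_neg_one, div_eq_mul_inv]
  ring_nf

lemma integrableOn_rpow_mul_exp_neg_div_Ioi {a b : ℝ} (ha : 0 < a) (hb : 0 < b) :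
    IntegrableOn (fun t => t ^ (-a - 1) * exp (-(b / t))) (Ioi 0) :=
  ((integrableOn_Ioi_comp_rpow_iff' _ (neg_ne_zero.2 one_ne_zero)).2
    (integrableOn_rpow_mul_exp_neg_mul_Ioi ha hb)).congr_fun
      (fun _ ht => (rpow_neg_sub_one_mul_exp_neg_div a b ht).symm) measurableSet_Ioi

lemma integral_rpow_mul_exp_neg_div_Ioi {a b : ℝ} (ha : 0 < a) (hb : 0 < b) :
    ∫ t in Ioi 0, t ^ (-a - 1) * exp (-(b / t)) = b ^ (-a) * Gamma a := by
  rw [setIntegral_congr_fun measurableSet_Ioi fun t ht => rpow_neg_sub_one_mul_exp_neg_div a b ht]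
  have hsubst := integral_comp_rpow_Ioi (fun s => s ^ (a - 1) * exp (-(b * s)))
    (neg_ne_zero.2 one_ne_zero)
  rw [integral_rpow_mul_exp_neg_mul_Ioi ha hb] at hsubst
  simpa [inv_rpow, rpow_neg, hb.le] using hsubst

section TimeIntegrals

variable {σ h : ℝ}

lemma lineHeatKernel_mul_rpow (σ h : ℝ) {t : ℝ} (ht : 0 < t) :
    lineHeatKernel t h * t ^ (-1 - σ) =
      (√(4 * π))⁻¹ * (t ^ (-(1 / 2 + σ) - 1) * exp (-(h ^ 2 / 4 / t))) := by
  rw [lineHeatKernel, sqrt_mul (by positivity), mul_inv, sqrt_eq_rpow t, ← rpow_neg ht.le,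
    show -(1 / 2 + σ) - 1 = -(1 / 2) + (-1 - σ) by ring, rpow_add ht, neg_div, div_div]
  ring

lemma integrableOn_lineHeatKernel_mul_rpow (hσ : -1 / 2 < σ) (hh : h ≠ 0) :
    IntegrableOn (fun t => lineHeatKernel t h * t ^ (-1 - σ)) (Ioi 0) :=
  (integrableOn_congr_fun (fun _ ht => lineHeatKernel_mul_rpow σ h ht) measurableSet_Ioi).2
    ((integrableOn_rpow_mul_exp_neg_div_Ioi (by linarith) (by positivity)).const_mul _)

lemma integral_lineHeatKernel_mul_rpow (hσ : -1 / 2 < σ) (hh : h ≠ 0) :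
    ∫ t in Ioi 0, lineHeatKernel t h * t ^ (-1 - σ) =
      (√(4 * π))⁻¹ * 4 ^ (1 / 2 + σ) * Gamma (1 / 2 + σ) * |h| ^ (-1 - 2 * σ) := by
  have hpow : (h ^ 2 / 4) ^ (-(1 / 2 + σ)) = 4 ^ (1 / 2 + σ) * |h| ^ (-1 - 2 * σ) := by
    rw [div_rpow (sq_nonneg h) (by norm_num), ← sq_abs, ← rpow_natCast, ← rpow_mul (abs_nonneg h),
      rpow_neg (by norm_num : (0 : ℝ) ≤ 4), div_inv_eq_mul, mul_comm]
    congr 2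
    push_cast
    ring
  rw [setIntegral_congr_fun measurableSet_Ioi fun t ht => lineHeatKernel_mul_rpow σ h ht,
    integral_const_mul, integral_rpow_mul_exp_neg_div_Ioi (by linarith) (by positivity), hpow]
  ring

variable {lam x y : ℝ}

lemma continuousOn_besselHeatKernel_mul_rpow (hlam : 0 ≤ lam) (σ : ℝ) (hx : 0 < x) (hy : 0 < y) :
    ContinuousOn (fun t => besselHeatKernel lam t x y * t ^ (-1 - σ)) (Ioi 0) :=
  ((continuousOn_besselHeatKernel hlam).comp (f := fun t => (t, x, y)) (by fun_prop)
    fun _ ht => ⟨ht, hx, hy⟩).mul (continuousOn_id.rpow_const fun _ ht => Or.inl (ne_of_gt ht))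

lemma integrableOn_besselHeatKernel_mul_rpow (hlam : 0 ≤ lam) (hσ : -1 / 2 < σ) (hx : 0 < x)
    (hy : 0 < y) (hxy : x ≠ y) :
    IntegrableOn (fun t => besselHeatKernel lam t x y * t ^ (-1 - σ)) (Ioi 0) := by
  obtain ⟨C, -, hle⟩ := exists_besselHeatKernel_le hlam
  refine ((integrableOn_lineHeatKernel_mul_rpow hσ (sub_ne_zero.2 hxy)).const_mul C).mono'
    ((continuousOn_besselHeatKernel_mul_rpow hlam σ hx hy).aestronglyMeasurable measurableSet_Ioi)
    (ae_restrict_of_forall_mem measurableSet_Ioi fun t (ht : 0 < t) => ?_)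
  have hW := besselHeatKernel_nonneg (lam := lam) (by linarith) ht.le (mul_pos hx hy).le
  rw [norm_of_nonneg (by positivity), ← mul_assoc]
  gcongr
  exact hle t x y ht hx hy

lemma setIntegral_besselHeatKernel_mul_rpow_nonneg (hlam : -1 / 2 ≤ lam) (σ : ℝ) (hx : 0 < x)
    (hy : 0 < y) : 0 ≤ ∫ t in Ioi 0, besselHeatKernel lam t x y * t ^ (-1 - σ) :=
  setIntegral_nonneg measurableSet_Ioi fun _ ht =>
    mul_nonneg (besselHeatKernel_nonneg hlam (le_of_lt ht) (mul_pos hx hy).le)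
      (rpow_nonneg (le_of_lt ht) _)

lemma exists_setIntegral_besselHeatKernel_mul_rpow_le (hlam : 0 ≤ lam) (hσ : -1 / 2 < σ) :
    ∃ C, ∀ x y, 0 < x → 0 < y → x ≠ y →
      ∫ t in Ioi 0, besselHeatKernel lam t x y * t ^ (-1 - σ) ≤ C * |x - y| ^ (-1 - 2 * σ) := by
  obtain ⟨C, -, hle⟩ := exists_besselHeatKernel_le hlam
  refine ⟨C * ((√(4 * π))⁻¹ * 4 ^ (1 / 2 + σ) * Gamma (1 / 2 + σ)), fun x y hx hy hxy => ?_⟩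
  rw [mul_assoc, ← integral_lineHeatKernel_mul_rpow hσ (sub_ne_zero.2 hxy), ← integral_const_mul]
  refine setIntegral_mono_on (integrableOn_besselHeatKernel_mul_rpow hlam hσ hx hy hxy)
    ((integrableOn_lineHeatKernel_mul_rpow hσ (sub_ne_zero.2 hxy)).const_mul C) measurableSet_Ioi
    fun t (ht : 0 < t) => ?_
  rw [← mul_assoc]
  gcongr
  exact hle t x y ht hx hy

lemma exists_abs_fracKernelK_le (hlam : 0 ≤ lam) (hσ : -1 / 2 < σ) :
    ∃ C, ∀ x y, 0 < x → 0 < y → x ≠ y →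
      |fracKernelK lam σ x y| ≤ C * |x - y| ^ (-1 - 2 * σ) := by
  obtain ⟨C, hle⟩ := exists_setIntegral_besselHeatKernel_mul_rpow_le hlam hσ
  refine ⟨|1 / (-gammaNeg σ)| * C, fun x y hx hy hxy => ?_⟩
  rw [fracKernelK, abs_mul,
    abs_of_nonneg (setIntegral_besselHeatKernel_mul_rpow_nonneg (by linarith) σ hx hy), mul_assoc]
  gcongr
  exact hle x y hx hy hxy

lemma continuousAt_fracKernelK_add (hlam : 0 ≤ lam) (hσ : -1 / 2 < σ) (hx : 0 < x)
    (hh : h ≠ 0) (hxh : 0 < x + h) :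
    ContinuousAt (fun x' => fracKernelK lam σ x' (x' + h)) x := by
  obtain ⟨C, -, hle⟩ := exists_besselHeatKernel_le hlam
  have hpos : ∀ᶠ x' in 𝓝 x, 0 < x' ∧ 0 < x' + h :=
    (eventually_gt_nhds hx).and
      ((continuousAt_id.add continuousAt_const).eventually (eventually_gt_nhds hxh))
  refine continuousAt_const.mul (continuousAt_of_dominated
    (bound := fun t => C * (lineHeatKernel t (-h) * t ^ (-1 - σ))) ?_ ?_
    ((integrableOn_lineHeatKernel_mul_rpow hσ (neg_ne_zero.2 hh)).const_mul C) ?_)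
  · filter_upwards [hpos] with x' hx'
    exact (continuousOn_besselHeatKernel_mul_rpow hlam σ hx'.1 hx'.2).aestronglyMeasurable
      measurableSet_Ioi
  · filter_upwards [hpos] with x' hx'
    refine ae_restrict_of_forall_mem measurableSet_Ioi fun t (ht : 0 < t) => ?_
    have hW := besselHeatKernel_nonneg (lam := lam) (by linarith) ht.le (mul_pos hx'.1 hx'.2).le
    rw [norm_of_nonneg (by positivity), ← mul_assoc]
    gcongr
    simpa using hle t x' (x' + h) ht hx'.1 hx'.2
  · exact ae_restrict_of_forall_mem measurableSet_Ioi fun t ht =>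
      (continuousAt_besselHeatKernel_add hlam ht hx hxh).mul continuousAt_const

end TimeIntegrals

/-! ### The function `B_σ^λ` -/

lemma continuousAt_setIntegral_Ioi_of_dominated_translate {E : Type*} [NormedAddCommGroup E]
    [NormedSpace ℝ E] {F : ℝ → ℝ → E} {x : ℝ} {bound : ℝ → ℝ}
    (hmeas : ∀ᶠ x' in 𝓝 x, AEStronglyMeasurable (F x') (volume.restrict (Ioi 0)))
    (hbound : ∀ᶠ x' in 𝓝 x, ∀ᵐ h, 0 < x' + h → ‖F x' (x' + h)‖ ≤ bound h)
    (hint : Integrable bound)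
    (hcont : ∀ᵐ h, 0 < x + h → ContinuousAt (fun x' => F x' (x' + h)) x) :
    ContinuousAt (fun x' => ∫ y in Ioi 0, F x' y) x := by
  have htranslate (x' : ℝ) : ∫ y in Ioi 0, F x' y = ∫ h, (Ioi 0).indicator (F x') (x' + h) := by
    rw [integral_add_left_eq_self ((Ioi 0).indicator (F x')), integral_indicator measurableSet_Ioi]
  simp only [htranslate]
  refine continuousAt_of_dominated (bound := fun h => ‖bound h‖) ?_ ?_ hint.norm ?_
  · filter_upwards [hmeas] with x' hx'
    exact ((aestronglyMeasurable_indicator_iff measurableSet_Ioi).2 hx').comp_measurePreserving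
      (measurePreserving_add_left volume x')
  · filter_upwards [hbound] with x' hx'
    filter_upwards [hx'] with h hh
    by_cases hpos : 0 < x' + h
    · rw [indicator_of_mem (mem_Ioi.2 hpos)]
      exact (hh hpos).trans (le_abs_self _)
    · rw [indicator_of_notMem (show x' + h ∉ Ioi 0 from hpos), norm_zero]
      exact norm_nonneg _
  · filter_upwards [hcont, volume.ae_ne (-x)] with h hh hne
    have hadd : ContinuousAt (fun x' => x' + h) x := by fun_prop
    rcases lt_or_gt_of_ne (fun h0 => hne (by linarith) : x + h ≠ 0) with hneg | hpos
    · refine continuousAt_const (y := 0) |>.congr ?_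
      filter_upwards [hadd.eventually (eventually_lt_nhds hneg)] with x' hx'
      exact (indicator_of_notMem (show x' + h ∉ Ioi 0 from hx'.not_gt) _).symm
    · refine (hh hpos).congr ?_
      filter_upwards [hadd.eventually (eventually_gt_nhds hpos)] with x' hx'
      exact (indicator_of_mem (mem_Ioi.2 hx') _).symm

lemma continuousAt_heatOne {lam t x : ℝ} (hlam : 0 ≤ lam) (ht : 0 < t) (hx : 0 < x) :
    ContinuousAt (heatOne lam t) x := by
  obtain ⟨C, -, hle⟩ := exists_besselHeatKernel_le hlam
  refine continuousAt_setIntegral_Ioi_of_dominated_translate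
    (bound := fun h => C * lineHeatKernel t (0 - h)) ?_ ?_
    ((integrable_lineHeatKernel_sub ht.le 0).const_mul C)
    (ae_of_all _ fun h => continuousAt_besselHeatKernel_add hlam ht hx)
  · filter_upwards [eventually_gt_nhds hx] with x' hx'
    exact (integrableOn_besselHeatKernel hlam ht hx').aestronglyMeasurable
  · filter_upwards [eventually_gt_nhds hx] with x' hx'
    refine ae_of_all _ fun h hxh => ?_
    rw [norm_of_nonneg (besselHeatKernel_nonneg (by linarith) ht.le (mul_pos hx' hxh).le)]
    simpa using hle t x' (x' + h) ht hx' hxh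

lemma aestronglyMeasurable_besselHeatKernel_prod {lam x : ℝ} (hlam : 0 ≤ lam) (hx : 0 < x) :
    AEStronglyMeasurable (fun p : ℝ × ℝ => besselHeatKernel lam p.1 x p.2)
      ((volume.restrict (Ioi 0)).prod (volume.restrict (Ioi 0))) := by
  rw [Measure.prod_restrict]
  refine ContinuousOn.aestronglyMeasurable ?_ (measurableSet_Ioi.prod measurableSet_Ioi)
  exact (continuousOn_besselHeatKernel hlam).comp (f := fun p : ℝ × ℝ => (p.1, x, p.2))
    (by fun_prop) fun p hp => ⟨hp.1, hx, hp.2⟩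

lemma aestronglyMeasurable_heatOne_sub_one_mul_rpow {lam x : ℝ} (hlam : 0 ≤ lam) (σ : ℝ)
    (hx : 0 < x) :
    AEStronglyMeasurable (fun t => (heatOne lam t x - 1) * t ^ (-1 - σ))
      (volume.restrict (Ioi 0)) :=
  ((aestronglyMeasurable_besselHeatKernel_prod hlam hx).integral_prod_right'.sub
    aestronglyMeasurable_const).mul (Measurable.aestronglyMeasurable (by fun_prop))

lemma integrableOn_min_mul_rpow_mul_rpow {a b A B : ℝ} (hA : 0 ≤ A) (hB : 0 ≤ B) (hb : b < -1)
    (hab : -1 < a + b) : IntegrableOn (fun t => min A (B * t ^ a) * t ^ b) (Ioi 0) := by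
  have hmeas : Measurable fun t : ℝ => min A (B * t ^ a) * t ^ b := by fun_prop
  have hnonneg {t : ℝ} (ht : 0 < t) : 0 ≤ min A (B * t ^ a) := le_min hA (by positivity)
  rw [← Ioc_union_Ioi_eq_Ioi zero_le_one]
  refine IntegrableOn.union ?_ ?_
  · have hpow := ((intervalIntegral.intervalIntegrable_rpow' hab (a := 0) (b := 1)).1.const_mul B)
    refine hpow.mono' hmeas.aestronglyMeasurable
      (ae_restrict_of_forall_mem measurableSet_Ioc fun t ht => ?_)
    have := hnonneg ht.1
    have := ht.1
    rw [norm_of_nonneg (by positivity), rpow_add ht.1, ← mul_assoc]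
    gcongr
    exact min_le_right _ _
  · refine ((integrableOn_Ioi_rpow_of_lt hb one_pos).const_mul A).mono' hmeas.aestronglyMeasurable
      (ae_restrict_of_forall_mem measurableSet_Ioi fun t (ht : 1 < t) => ?_)
    have ht0 : 0 < t := one_pos.trans ht
    have := hnonneg ht0
    rw [norm_of_nonneg (by positivity)]
    gcongr
    exact min_le_left _ _

section FracFunB

variable {lam σ x : ℝ}

lemma exists_abs_heatOne_sub_one_mul_rpow_le (hlam : 0 ≤ lam) (hσ : 0 < σ) (hσ1 : σ < 1)
    (hx : 0 < x) :
    ∃ g : ℝ → ℝ, IntegrableOn g (Ioi 0) ∧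
      ∀ t x', 0 < t → x / 2 ≤ x' → |(heatOne lam t x' - 1) * t ^ (-1 - σ)| ≤ g t := by
  obtain ⟨C, hC, hle⟩ := exists_abs_heatOne_sub_one_le hlam
  refine ⟨fun t => C * (min 1 (((x / 2) ^ 2)⁻¹ * t ^ (1 : ℝ)) * t ^ (-1 - σ)),
    (integrableOn_min_mul_rpow_mul_rpow zero_le_one (by positivity) (by linarith)
      (by linarith)).const_mul C, fun t x' ht hx' => ?_⟩
  beta_reduce
  rw [abs_mul, abs_of_pos (rpow_pos_of_pos ht (-1 - σ)), ← mul_assoc, rpow_one, inv_mul_eq_div]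
  gcongr
  exact (hle t x' ht (by linarith)).trans (by gcongr)

lemma integrableOn_heatOne_sub_one_mul_rpow (hlam : 0 ≤ lam) (hσ : 0 < σ) (hσ1 : σ < 1)
    (hx : 0 < x) : IntegrableOn (fun t => (heatOne lam t x - 1) * t ^ (-1 - σ)) (Ioi 0) := by
  obtain ⟨g, hg, hle⟩ := exists_abs_heatOne_sub_one_mul_rpow_le hlam hσ hσ1 hx
  exact hg.mono' (aestronglyMeasurable_heatOne_sub_one_mul_rpow hlam σ hx)
    (ae_restrict_of_forall_mem measurableSet_Ioi fun t ht => hle t x ht (by linarith))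

lemma continuousAt_fracFunB (hlam : 0 ≤ lam) (hσ : 0 < σ) (hσ1 : σ < 1) (hx : 0 < x) :
    ContinuousAt (fracFunB lam σ) x := by
  obtain ⟨g, hg, hle⟩ := exists_abs_heatOne_sub_one_mul_rpow_le hlam hσ hσ1 hx
  refine continuousAt_const.mul (continuousAt_of_dominated ?_ ?_ hg ?_)
  · filter_upwards [eventually_gt_nhds hx] with x' hx'
    exact aestronglyMeasurable_heatOne_sub_one_mul_rpow hlam σ hx'
  · filter_upwards [eventually_gt_nhds (half_lt_self hx)] with x' hx'
    exact ae_restrict_of_forall_mem measurableSet_Ioi fun t ht => hle t x' ht hx'.le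
  · exact ae_restrict_of_forall_mem measurableSet_Ioi fun t ht =>
      ((continuousAt_heatOne hlam ht hx).sub continuousAt_const).mul continuousAt_const

end FracFunB

/-! ### Hölder functions against `|x - y| ^ (-1 - 2σ)` -/

section HolderIntegrability

variable {σ : ℝ} {M α : ℝ≥0} {u : ℝ → ℝ}

lemma integrable_comp_abs {E : Type*} [NormedAddCommGroup E] {f : ℝ → E}
    (hf : IntegrableOn f (Ioi 0)) : Integrable fun x => f |x| := by
  have hpos : IntegrableOn (fun x => f |x|) (Ioi 0) :=
    hf.congr_fun (fun x hx => by rw [abs_of_pos hx]) measurableSet_Ioi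
  have hneg : IntegrableOn (fun x => f |x|) (Iio 0) := by
    have h := ((Measure.measurePreserving_neg (volume : Measure ℝ)).integrableOn_comp_preimage
      (Homeomorph.neg ℝ).measurableEmbedding).2 hpos
    simpa only [Function.comp_def, abs_neg, neg_preimage, neg_Ioi, neg_zero] using h
  rw [← integrableOn_univ, ← Iio_union_Ici (a := (0 : ℝ))]
  exact hneg.union ((integrableOn_Ici_iff_integrableOn_Ioi).2 hpos)

lemma integrable_min_one_abs_rpow_mul_abs_rpow {a b : ℝ} (hb : b < -1) (hab : -1 < a + b) :
    Integrable fun h : ℝ => min 1 (|h| ^ a) * |h| ^ b := by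
  simpa only [one_mul] using
    integrable_comp_abs (integrableOn_min_mul_rpow_mul_rpow zero_le_one zero_le_one hb hab)

lemma abs_sub_rpow_neg_le {x y q : ℝ} (hxy : 1 ≤ |x - y|) (hq : 0 ≤ q) :
    |x - y| ^ (-q) ≤ (2 + |x|) ^ q / (1 + |y|) ^ q := by
  have hle : 1 + |y| ≤ (2 + |x|) * |x - y| := by
    nlinarith [abs_sub_abs_le_abs_sub y x, abs_sub_comm x y, abs_nonneg x]
  have hpos : 0 < |x - y| := one_pos.trans_le hxy
  rw [rpow_neg hpos.le, le_div_iff₀ (by positivity), inv_mul_le_iff₀ (by positivity),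
    mul_comm, ← mul_rpow (by positivity) hpos.le]
  gcongr

lemma abs_sub_le_of_holderOnWith {s : Set ℝ} (hu : HolderOnWith M α u s) {x y : ℝ} (hx : x ∈ s)
    (hy : y ∈ s) : |u x - u y| ≤ M * |x - y| ^ (α : ℝ) := by
  simpa only [dist_eq] using hu.dist_le hx hy

lemma abs_sub_add_le_of_holderOnWith {s : Set ℝ} (hu : HolderOnWith M α u s) {x x' h : ℝ}
    (hxx' : |x' - x| ≤ 1) (hx : x ∈ s) (hx' : x' ∈ s) (hxh : x + h ∈ s) (hx'h : x' + h ∈ s) :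
    |u x' - u (x' + h)| ≤ 2 * M * min 1 (|h| ^ (α : ℝ)) + |u x - u (x + h)| := by
  rcases le_total |h| 1 with hh | hh
  · have hsub := abs_sub_le_of_holderOnWith hu hx' hx'h
    rw [sub_add_cancel_left, abs_neg] at hsub
    rw [min_eq_right (rpow_le_one (abs_nonneg h) hh α.coe_nonneg)]
    have : 0 ≤ M * |h| ^ (α : ℝ) := by positivity
    linarith [abs_nonneg (u x - u (x + h))]
  · have hle {a b : ℝ} (ha : a ∈ s) (hb : b ∈ s) (hab : |a - b| ≤ 1) : |u a - u b| ≤ M :=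
      (abs_sub_le_of_holderOnWith hu ha hb).trans
        (mul_le_of_le_one_right M.coe_nonneg (rpow_le_one (abs_nonneg _) hab α.coe_nonneg))
    rw [min_eq_left (one_le_rpow hh α.coe_nonneg)]
    have hshift : |u (x + h) - u (x' + h)| ≤ M :=
      hle hxh hx'h (by rwa [add_sub_add_right_eq_sub, abs_sub_comm])
    linarith [abs_sub_le (u x') (u x) (u (x' + h)), abs_sub_le (u x) (u (x + h)) (u (x' + h)),
      hle hx' hx hxx']

lemma integrableOn_sub_mul_abs_sub_rpow (hσ : 0 < σ) (hα : 2 * σ < α)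
    (hu : HolderOnWith M α u (Ioi 0))
    (huL : IntegrableOn (fun y => |u y| / (1 + y) ^ (1 + 2 * σ)) (Ioi 0)) {x : ℝ} (hx : 0 < x) :
    IntegrableOn (fun y => (u x - u y) * |x - y| ^ (-1 - 2 * σ)) (Ioi 0) := by
  have hα0 : 0 < α := by exact_mod_cast (by linarith : (0 : ℝ) < α)
  have hkernel : Integrable fun y => min 1 (|x - y| ^ (α : ℝ)) * |x - y| ^ (-1 - 2 * σ) :=
    (integrable_min_one_abs_rpow_mul_abs_rpow (by linarith) (by linarith)).comp_sub_left x
  have hmeas : AEStronglyMeasurable u (volume.restrict (Ioi 0)) :=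
    (hu.continuousOn hα0).aestronglyMeasurable measurableSet_Ioi
  refine Integrable.mono' ((hkernel.integrableOn.const_mul (M + |u x|)).add
      (huL.const_mul ((2 + |x|) ^ (1 + 2 * σ))))
    ((aestronglyMeasurable_const.sub hmeas).mul (Measurable.aestronglyMeasurable (by fun_prop)))
    (ae_restrict_of_forall_mem measurableSet_Ioi fun y (hy : 0 < y) => ?_)
  simp only [Pi.add_apply, norm_mul, norm_eq_abs, abs_of_nonneg (rpow_nonneg (abs_nonneg _) _)]
  rcases le_total |x - y| 1 with hxy | hxy
  · rw [min_eq_right (rpow_le_one (abs_nonneg _) hxy α.coe_nonneg), ← mul_assoc]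
    refine le_add_of_le_of_nonneg ?_ (by positivity)
    gcongr
    exact (abs_sub_le_of_holderOnWith hu hx hy).trans
      (by gcongr; exact le_add_of_nonneg_right (abs_nonneg _))
  · rw [min_eq_left (one_le_rpow hxy α.coe_nonneg), one_mul]
    have hweight := abs_sub_rpow_neg_le hxy (by linarith : 0 ≤ 1 + 2 * σ)
    rw [abs_of_pos hy, neg_add'] at hweight
    calc |u x - u y| * |x - y| ^ (-1 - 2 * σ)
        ≤ (|u x| + |u y|) * |x - y| ^ (-1 - 2 * σ) := by gcongr; exact abs_sub _ _
      _ = |u x| * |x - y| ^ (-1 - 2 * σ) + |u y| * |x - y| ^ (-1 - 2 * σ) := add_mul _ _ _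
      _ ≤ (M + |u x|) * |x - y| ^ (-1 - 2 * σ) +
          |u y| * ((2 + |x|) ^ (1 + 2 * σ) / (1 + y) ^ (1 + 2 * σ)) := by
        gcongr; exact le_add_of_nonneg_left M.coe_nonneg
      _ = _ := by rw [mul_div_left_comm]

end HolderIntegrability

/-! ### The pointwise formula -/

section PointwiseFormula

variable {lam σ x : ℝ} {u : ℝ → ℝ}

lemma aestronglyMeasurable_sub_of_integrableOn {p : ℝ}
    (hu : IntegrableOn (fun y => (u x - u y) * |x - y| ^ p) (Ioi 0)) :
    AEStronglyMeasurable (fun y => u x - u y) (volume.restrict (Ioi 0)) := by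
  refine (hu.aestronglyMeasurable.mul (g := fun y => |x - y| ^ (-p))
    (Measurable.aestronglyMeasurable (by fun_prop))).congr ?_
  filter_upwards [ae_restrict_of_ae (volume.ae_ne x)] with y hy
  have hpos : 0 < |x - y| := abs_pos.2 (sub_ne_zero.2 hy.symm)
  rw [Pi.mul_apply, mul_assoc, ← rpow_add hpos, add_neg_cancel, rpow_zero, mul_one]

lemma integrable_sub_mul_besselHeatKernel_mul_rpow (hlam : 0 ≤ lam) (hσ : -1 / 2 < σ) (hx : 0 < x)
    (hu : IntegrableOn (fun y => (u x - u y) * |x - y| ^ (-1 - 2 * σ)) (Ioi 0)) :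
    Integrable (fun p : ℝ × ℝ => (u x - u p.1) * (besselHeatKernel lam p.2 x p.1 * p.2 ^ (-1 - σ)))
      ((volume.restrict (Ioi 0)).prod (volume.restrict (Ioi 0))) := by
  obtain ⟨C, hC⟩ := exists_setIntegral_besselHeatKernel_mul_rpow_le hlam hσ
  have hmeas : AEStronglyMeasurable
      (fun p : ℝ × ℝ => (u x - u p.1) * (besselHeatKernel lam p.2 x p.1 * p.2 ^ (-1 - σ)))
      ((volume.restrict (Ioi 0)).prod (volume.restrict (Ioi 0))) :=
    (aestronglyMeasurable_sub_of_integrableOn hu).comp_fst.mul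
      ((aestronglyMeasurable_besselHeatKernel_prod hlam hx).prod_swap.mul
        (Measurable.aestronglyMeasurable (by fun_prop)))
  have hne : ∀ᵐ y ∂volume.restrict (Ioi 0), y ≠ x := ae_restrict_of_ae (volume.ae_ne x)
  refine (integrable_prod_iff hmeas).2
    ⟨?_, (hu.norm.const_mul C).mono' hmeas.norm.integral_prod_right' ?_⟩
  · filter_upwards [hne, ae_restrict_mem measurableSet_Ioi] with y hy hy0
    exact (integrableOn_besselHeatKernel_mul_rpow hlam hσ hx hy0 hy.symm).const_mul _
  · filter_upwards [hne, ae_restrict_mem measurableSet_Ioi] with y hy (hy0 : 0 < y)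
    have hnorm : ∫ t in Ioi 0, ‖(u x - u y) * (besselHeatKernel lam t x y * t ^ (-1 - σ))‖ =
        |u x - u y| * ∫ t in Ioi 0, besselHeatKernel lam t x y * t ^ (-1 - σ) := by
      rw [← integral_const_mul]
      refine setIntegral_congr_fun measurableSet_Ioi fun t (ht : 0 < t) => ?_
      have := besselHeatKernel_nonneg (lam := lam) (by linarith) ht.le (mul_pos hx hy0).le
      simp only [norm_mul, norm_eq_abs, abs_of_nonneg this, abs_of_pos (rpow_pos_of_pos ht _)]
    rw [hnorm, norm_of_nonneg (mul_nonneg (abs_nonneg _)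
      (setIntegral_besselHeatKernel_mul_rpow_nonneg (by linarith) σ hx hy0)), norm_mul, norm_eq_abs,
      norm_of_nonneg (by positivity : 0 ≤ |x - y| ^ (-1 - 2 * σ)), mul_left_comm]
    gcongr
    exact hC x y hx hy0 hy.symm

lemma integral_sub_mul_besselHeatKernel_mul_rpow (lam σ x : ℝ) (u : ℝ → ℝ) (y : ℝ) :
    1 / -gammaNeg σ *
      ∫ t in Ioi 0, (u x - u y) * (besselHeatKernel lam t x y * t ^ (-1 - σ)) =
      (u x - u y) * fracKernelK lam σ x y := by
  rw [integral_const_mul, mul_left_comm, fracKernelK]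

lemma integrableOn_sub_mul_fracKernelK (hlam : 0 ≤ lam) (hσ : -1 / 2 < σ) (hx : 0 < x)
    (hu : IntegrableOn (fun y => (u x - u y) * |x - y| ^ (-1 - 2 * σ)) (Ioi 0)) :
    IntegrableOn (fun y => (u x - u y) * fracKernelK lam σ x y) (Ioi 0) := by
  simpa only [IntegrableOn, integral_sub_mul_besselHeatKernel_mul_rpow] using
    (integrable_sub_mul_besselHeatKernel_mul_rpow hlam hσ hx hu).integral_prod_left.const_mul
      (1 / -gammaNeg σ)

lemma heatSemigroup_sub_mul_rpow_ae_eq (hlam : 0 ≤ lam) (hσ : -1 / 2 < σ) (hx : 0 < x)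
    (hu : IntegrableOn (fun y => (u x - u y) * |x - y| ^ (-1 - 2 * σ)) (Ioi 0)) :
    (fun t => (heatSemigroup lam u t x - u x) * t ^ (-1 - σ)) =ᵐ[volume.restrict (Ioi 0)]
      fun t => u x * ((heatOne lam t x - 1) * t ^ (-1 - σ)) -
        ∫ y in Ioi 0, (u x - u y) * (besselHeatKernel lam t x y * t ^ (-1 - σ)) := by
  filter_upwards [ae_restrict_mem measurableSet_Ioi,
    (integrable_sub_mul_besselHeatKernel_mul_rpow hlam hσ hx hu).prod_left_ae]
    with t (ht : 0 < t) hint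
  have hdiff : IntegrableOn (fun y => (u x - u y) * besselHeatKernel lam t x y) (Ioi 0) := by
    have hunit : IsUnit (t ^ (-1 - σ)) := (rpow_pos_of_pos ht _).ne'.isUnit
    simpa only [IntegrableOn, ← mul_assoc, integrable_mul_const_iff hunit] using hint
  have hsplit : heatSemigroup lam u t x = u x * heatOne lam t x -
      ∫ y in Ioi 0, (u x - u y) * besselHeatKernel lam t x y := by
    rw [heatSemigroup, heatOne, ← integral_const_mul,
      ← integral_sub ((integrableOn_besselHeatKernel hlam ht hx).const_mul _) hdiff]
    congr with y
    ring
  simp only [← mul_assoc]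
  rw [integral_mul_const, hsplit]
  ring

lemma integrableOn_heatSemigroup_sub_mul_rpow (hlam : 0 ≤ lam) (hσ : 0 < σ) (hσ1 : σ < 1)
    (hx : 0 < x)
    (hu : IntegrableOn (fun y => (u x - u y) * |x - y| ^ (-1 - 2 * σ)) (Ioi 0)) :
    IntegrableOn (fun t => (heatSemigroup lam u t x - u x) * t ^ (-1 - σ)) (Ioi 0) :=
  (((integrableOn_heatOne_sub_one_mul_rpow hlam hσ hσ1 hx).const_mul (u x)).sub
    (integrable_sub_mul_besselHeatKernel_mul_rpow hlam (by linarith) hx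
      hu).integral_prod_right).congr
    (heatSemigroup_sub_mul_rpow_ae_eq hlam (by linarith) hx hu).symm

lemma integral_heatSemigroup_sub_mul_rpow (hlam : 0 ≤ lam) (hσ : 0 < σ) (hσ1 : σ < 1) (hx : 0 < x)
    (hu : IntegrableOn (fun y => (u x - u y) * |x - y| ^ (-1 - 2 * σ)) (Ioi 0)) :
    1 / gammaNeg σ * ∫ t in Ioi 0, (heatSemigroup lam u t x - u x) * t ^ (-1 - σ) =
      (∫ y in Ioi 0, (u x - u y) * fracKernelK lam σ x y) + u x * fracFunB lam σ x := by
  have hdouble := integrable_sub_mul_besselHeatKernel_mul_rpow hlam (by linarith) hx hu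
  have hswap := integral_integral_swap
    (f := fun y t => (u x - u y) * (besselHeatKernel lam t x y * t ^ (-1 - σ))) hdouble
  simp only [← integral_sub_mul_besselHeatKernel_mul_rpow]
  rw [integral_congr_ae (heatSemigroup_sub_mul_rpow_ae_eq hlam (by linarith) hx hu),
    integral_sub ((integrableOn_heatOne_sub_one_mul_rpow hlam hσ hσ1 hx).const_mul (u x))
      hdouble.integral_prod_right, ← hswap, integral_const_mul, integral_const_mul, fracFunB,
    one_div_neg_eq_neg_one_div]
  ring

end PointwiseFormula

lemma continuousAt_integral_sub_mul_fracKernelK {lam σ x : ℝ} {M α : ℝ≥0} {u : ℝ → ℝ}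
    (hlam : 0 ≤ lam) (hσ : 0 < σ) (hα : 2 * σ < α) (hu : HolderOnWith M α u (Ioi 0))
    (huL : IntegrableOn (fun y => |u y| / (1 + y) ^ (1 + 2 * σ)) (Ioi 0)) (hx : 0 < x) :
    ContinuousAt (fun x => ∫ y in Ioi 0, (u x - u y) * fracKernelK lam σ x y) x := by
  have hα0 : 0 < α := by exact_mod_cast (by linarith : (0 : ℝ) < α)
  have hcont {y : ℝ} (hy : 0 < y) : ContinuousAt u y :=
    (hu.continuousOn hα0).continuousAt (Ioi_mem_nhds hy)
  obtain ⟨C, hC⟩ := exists_abs_fracKernelK_le (σ := σ) hlam (by linarith)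
  -- The dominating function is centred at `z > x` because `0 < x' + h` must imply `0 < z + h`.
  set z := x + 1 / 2 with hz
  have hz0 : 0 < z := by linarith
  let g (h : ℝ) : ℝ :=
    (Ioi 0).indicator (fun y => ‖(u z - u y) * |z - y| ^ (-1 - 2 * σ)‖) (z + h)
  have hg : Integrable g :=
    ((integrable_indicator_iff measurableSet_Ioi).2
      (integrableOn_sub_mul_abs_sub_rpow hσ hα hu huL hz0).norm).comp_add_left z
  refine continuousAt_setIntegral_Ioi_of_dominated_translate
    (bound := fun h => C * (2 * M * (min 1 (|h| ^ (α : ℝ)) * |h| ^ (-1 - 2 * σ)) + g h)) ?_ ?_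
    ((((integrable_min_one_abs_rpow_mul_abs_rpow (by linarith) (by linarith)).const_mul _).add
      hg).const_mul C) ?_
  · filter_upwards [eventually_gt_nhds hx] with x' hx'
    exact (integrableOn_sub_mul_fracKernelK hlam (by linarith) hx'
      (integrableOn_sub_mul_abs_sub_rpow hσ hα hu huL hx')).aestronglyMeasurable
  · filter_upwards [eventually_gt_nhds hx, Ioo_mem_nhds (sub_lt_self x one_half_pos)
      (lt_add_of_pos_right x one_half_pos)] with x' hx' hx'x
    filter_upwards [volume.ae_ne 0] with h hh hx'h
    have hzh : z + h ∈ Ioi 0 := show 0 < z + h by linarith [hx'x.2]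
    have hsub : |u x' - u (x' + h)| ≤ 2 * M * min 1 (|h| ^ (α : ℝ)) + |u z - u (z + h)| :=
      abs_sub_add_le_of_holderOnWith hu (abs_le.2 ⟨by linarith [hx'x.1], by linarith [hx'x.2]⟩)
        hz0 hx' hzh hx'h
    have hK : |fracKernelK lam σ x' (x' + h)| ≤ C * |h| ^ (-1 - 2 * σ) := by
      simpa using hC x' (x' + h) hx' hx'h (by simpa using hh)
    simp only [g, indicator_of_mem hzh, norm_mul, norm_eq_abs, sub_add_cancel_left, abs_neg,
      abs_of_nonneg (rpow_nonneg (abs_nonneg _) _)]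
    calc _ ≤ (2 * M * min 1 (|h| ^ (α : ℝ)) + |u z - u (z + h)|) * (C * |h| ^ (-1 - 2 * σ)) := by
          gcongr
      _ = _ := by ring
  · filter_upwards [volume.ae_ne 0] with h hh hxh
    exact ((hcont hx).sub ((hcont hxh).comp (f := fun x' => x' + h) (by fun_prop))).mul
      (continuousAt_fracKernelK_add hlam (by linarith) hx hh hxh)

lemma MemHolderPlus.exists_holderOnWith {α : ℝ≥0} {u : ℝ → ℝ} (hu : MemHolderPlus α u) :
    ∃ M : ℝ≥0, HolderOnWith M α u (Ioi 0) := by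
  obtain ⟨-, ⟨M, hM⟩, -⟩ := hu
  refine ⟨M.toNNReal, fun x hx y hy => ?_⟩
  rcases eq_or_ne x y with rfl | hxy
  · simp
  · have hdist : 0 < dist x y ^ (α : ℝ) := rpow_pos_of_pos (dist_pos.2 hxy) _
    have hle : dist (u x) (u y) ≤ M.toNNReal * dist x y ^ (α : ℝ) :=
      ((div_le_iff₀ hdist).1 (hM ⟨x, y, hx, hy, hxy, rfl⟩)).trans
        (mul_le_mul_of_nonneg_right (le_coe_toNNReal M) hdist.le)
    rw [dist_nndist, dist_nndist] at hle
    rw [edist_nndist, edist_nndist, ← ENNReal.coe_rpow_of_nonneg _ α.coe_nonneg]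
    exact_mod_cast hle

theorem pointwise_formula_small_sigma_general {lam σ : ℝ} {M α : ℝ≥0} {u : ℝ → ℝ}
    (hlam : 0 ≤ lam) (hσ : 0 < σ) (hσ1 : σ < 1) (hα : 2 * σ < α)
    (hu : HolderOnWith M α u (Ioi 0))
    (huL : IntegrableOn (fun y => |u y| / (1 + y) ^ (1 + 2 * σ)) (Ioi 0)) :
    (∀ x : ℝ, 0 < x →
      IntegrableOn (fun y => (u x - u y) * fracKernelK lam σ x y) (Ioi 0) ∧
      IntegrableOn (fun t => (heatSemigroup lam u t x - u x) * t ^ (-1 - σ)) (Ioi 0) ∧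
      1 / gammaNeg σ * (∫ t in Ioi 0, (heatSemigroup lam u t x - u x) * t ^ (-1 - σ)) =
        (∫ y in Ioi 0, (u x - u y) * fracKernelK lam σ x y) + u x * fracFunB lam σ x) ∧
    ContinuousOn
      (fun x => (∫ y in Ioi 0, (u x - u y) * fracKernelK lam σ x y) + u x * fracFunB lam σ x)
      (Ioi 0) := by
  have hα0 : 0 < α := by exact_mod_cast (by linarith : (0 : ℝ) < α)
  refine ⟨fun x hx => ?_, continuousOn_of_forall_continuousAt fun x hx => ?_⟩
  · have hdiff := integrableOn_sub_mul_abs_sub_rpow hσ hα hu huL hx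
    exact ⟨integrableOn_sub_mul_fracKernelK hlam (by linarith) hx hdiff,
      integrableOn_heatSemigroup_sub_mul_rpow hlam hσ hσ1 hx hdiff,
      integral_heatSemigroup_sub_mul_rpow hlam hσ hσ1 hx hdiff⟩
  · exact (continuousAt_integral_sub_mul_fracKernelK hlam hσ hα hu huL hx).add
      (((hu.continuousOn hα0).continuousAt (Ioi_mem_nhds hx)).mul
        (continuousAt_fracFunB hlam hσ hσ1 hx))

/-- Pointwise formula for `Δ_λ^σ u` when `0 < σ < 1/2`. -/
theorem pointwise_formula_small_sigma
    (lam σ α : ℝ) (hlam : 1 ≤ lam) (hσ0 : 0 < σ) (hσ1 : σ < 1 / 2)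
    (hα : 2 * σ < α) (hα1 : α ≤ 1)
    (u : ℝ → ℝ) (hu : MemHolderPlus α u)
    (huL : IntegrableOn (fun y => |u y| / (1 + y) ^ (1 + 2 * σ)) (Set.Ioi 0)) :
    (∀ x : ℝ, 0 < x →
      IntegrableOn (fun y => (u x - u y) * fracKernelK lam σ x y) (Set.Ioi 0) ∧
      IntegrableOn (fun t => (heatSemigroup lam u t x - u x) * t ^ (-1 - σ)) (Set.Ioi 0) ∧
      1 / gammaNeg σ *
          (∫ t in Set.Ioi (0 : ℝ), (heatSemigroup lam u t x - u x) * t ^ (-1 - σ)) =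
        (∫ y in Set.Ioi (0 : ℝ), (u x - u y) * fracKernelK lam σ x y) +
          u x * fracFunB lam σ x) ∧
    ContinuousOn
      (fun x => (∫ y in Set.Ioi (0 : ℝ), (u x - u y) * fracKernelK lam σ x y) +
        u x * fracFunB lam σ x) (Set.Ioi 0) := by
  lift α to ℝ≥0 using by linarith
  obtain ⟨M, hM⟩ := hu.exists_holderOnWith
  exact pointwise_formula_small_sigma_general (by linarith) hσ0 (by linarith) hα hM huL
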